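/- Let n ≥ 1 be a natural number. Then for every a ∈ Λ_n, the strict inequality ∫_0^T |a(x) − λ_{2n−1}| dx > (8πn(n+1)/T) · cot(nπ/(2(n+1))) holds. In particular, the infimum β_{1,n} = inf_{a ∈ Λ_n} ‖a − λ_{2n−1}‖_{L¹(0,T)} is not attained. -/

import Mathlib

open MeasureTheory Set Real

/-- `u` is a solution of `u'' + a·u = 0` on `[c,d]`, with derivative function `v`. -/
def IsSolOn (a u v : ℝ → ℝ) (c d : ℝ) : Prop :=
  (∀ x ∈ Set.Icc c d, HasDerivWithinAt u (v x) (Set.Icc c d) x) ∧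
  (∀ x ∈ Set.Icc c d, v x = v c - ∫ t in c..x, a t * u t)

/-- Membership in `L_T`: measurable, `T`-periodic and integrable on `[0,T]`. -/
def MemLT (T : ℝ) (a : ℝ → ℝ) : Prop :=
  Measurable a ∧ (∀ x, a (x + T) = a x) ∧ IntegrableOn a (Set.Icc 0 T)

/-- `c ≺ d` : `c ≤ d` a.e. on `[0,T]` and `c < d` on a set of positive measure. -/
def Prec (T : ℝ) (c d : ℝ → ℝ) : Prop :=
  (∀ᵐ x ∂(volume.restrict (Set.Icc 0 T)), c x ≤ d x) ∧
  0 < volume {x ∈ Set.Icc 0 T | c x < d x}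

/-- `(u,v)` solves the periodic problem `u'' + a u = 0`, `u(0)=u(T)`, `u'(0)=u'(T)`. -/
def PeriodicSol (T : ℝ) (a u v : ℝ → ℝ) : Prop :=
  IsSolOn a u v 0 T ∧ u 0 = u T ∧ v 0 = v T

/-- `(u,v)` solves the antiperiodic problem `u'' + a u = 0`, `u(0)+u(T)=0`, `u'(0)+u'(T)=0`. -/
def AntiperiodicSol (T : ℝ) (a u v : ℝ → ℝ) : Prop :=
  IsSolOn a u v 0 T ∧ u 0 + u T = 0 ∧ v 0 + v T = 0

/-- The `(2n-1)`-st periodic eigenvalue `λ_{2n-1} = 4 n² π² / T²`. -/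
noncomputable def lam (T : ℝ) (n : ℕ) : ℝ := 4 * (n : ℝ) ^ 2 * Real.pi ^ 2 / T ^ 2

/-- The `(2n-1)`-st antiperiodic eigenvalue `λ̃_{2n-1} = (2n-1)² π² / T²`. -/
noncomputable def lamT (T : ℝ) (n : ℕ) : ℝ := (2 * (n : ℝ) - 1) ^ 2 * Real.pi ^ 2 / T ^ 2

/-- The set `Λ_n`. -/
def LambdaN (T : ℝ) (n : ℕ) : Set (ℝ → ℝ) :=
  {a | MemLT T a ∧ Prec T (fun _ => lam T n) a ∧
    ∃ u v : ℝ → ℝ, PeriodicSol T a u v ∧ ∃ x ∈ Set.Icc 0 T, u x ≠ 0}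

/-- The set `Λ̃_n`. -/
def LambdaTildeN (T : ℝ) (n : ℕ) : Set (ℝ → ℝ) :=
  {a | MemLT T a ∧ Prec T (fun _ => lamT T n) a ∧
    ∃ u v : ℝ → ℝ, AntiperiodicSol T a u v ∧ ∃ x ∈ Set.Icc 0 T, u x ≠ 0}

/-- The constant `β_{1,n}` of the periodic `L¹` Lyapunov inequality. -/
noncomputable def beta1 (T : ℝ) (n : ℕ) : ℝ :=
  8 * Real.pi * (n : ℝ) * ((n : ℝ) + 1) / T * Real.cot ((n : ℝ) * Real.pi / (2 * ((n : ℝ) + 1)))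

/-- The constant `β̃_{1,n}` of the antiperiodic `L¹` Lyapunov inequality. -/
noncomputable def betaT1 (T : ℝ) (n : ℕ) : ℝ :=
  2 * Real.pi * (2 * (n : ℝ) - 1) * (2 * (n : ℝ) + 1) / T *
    Real.cot ((2 * (n : ℝ) - 1) * Real.pi / (2 * (2 * (n : ℝ) + 1)))

/-!
Write `ω = 2 π n / T`, so that `λ_{2n-1} = ω²`, and let `φ` be the Prüfer angle at frequency `ω` of
a periodic solution for some `a ∈ Λ_n`. It satisfies `φ' = ω + (a - ω²) / ω * cos² φ`, and
`φ(T) - φ(0)` is an integer multiple of `2 π`. Since `a ≻ ω²`, the angle turns by more than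
`ω T = 2 π n`, hence by at least `2 π (n + 1)`. Let `S` be `sec²` truncated at `sec² δ`, where
`δ = π / (2 (n + 1))`. From `S(φ) cos² φ ≤ 1` follows
`ω φ' S(φ) - ω² S(φ) ≤ a - ω²`. The integral of `φ' S(φ)` only depends on the turning of `φ`, while
`S(φ) ≤ sec² δ`, with strict inequality where `φ` meets a multiple of `π`. This choice of `δ`
cancels all terms but `tan δ`, which gives `beta1 < ∫ (a - ω²)`.

For sharpness let `α = n / (n + 1)`. Up to scaling, the limiting extremal solution is `sin (α β)`
with `β` a triangle wave of slopes `±1` and amplitude `π / 2`; its potential is `α²` plus Dirac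
masses at the corners. Rounding the corners, `β(τ) = arcsin (κ cos τ)` with `κ < 1`, yields elements
of `Λ_n` whose distances to `λ_{2n-1}` tend to `beta1` as `κ → 1`.
-/

/-! ### Absolutely continuous functions with a prescribed derivative -/

section AbsolutelyContinuous

variable {E : Type*} [NormedAddCommGroup E] {f g : ℝ → E} {a b : ℝ}

lemma absolutelyContinuousOnInterval_of_dist_le {X Y : Type*} [PseudoMetricSpace X]
    [PseudoMetricSpace Y] {f : ℝ → X} {g : ℝ → Y} {C : ℝ}
    (hg : AbsolutelyContinuousOnInterval g a b)
    (h : ∀ x ∈ uIcc a b, ∀ y ∈ uIcc a b, dist (f x) (f y) ≤ C * dist (g x) (g y)) :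
    AbsolutelyContinuousOnInterval f a b := by
  have hCg := Filter.Tendsto.const_mul C hg
  rw [mul_zero] at hCg
  refine squeeze_zero' (.of_forall fun I ↦ Finset.sum_nonneg fun i _ ↦ dist_nonneg) ?_ hCg
  filter_upwards [Filter.mem_inf_of_right (Filter.mem_principal_self _)] with I hI
  rw [Finset.mul_sum]
  exact Finset.sum_le_sum fun i hi ↦ h _ (hI.1 i hi).1 _ (hI.1 i hi).2

lemma ae_mem_Ioo_of_mem_uIcc (a b : ℝ) :
    ∀ᵐ x : ℝ, x ∈ uIcc a b → x ∈ Ioo (min a b) (max a b) := by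
  have hnull : ∀ c : ℝ, ∀ᵐ x : ℝ, x ≠ c := fun c ↦ by simp [ae_iff, measure_singleton]
  filter_upwards [hnull (min a b), hnull (max a b)] with x hmin hmax hx
  exact ⟨lt_of_le_of_ne' hx.1 hmin, lt_of_le_of_ne hx.2 hmax⟩

variable [NormedSpace ℝ E] {f' g' : ℝ → E}

lemma absolutelyContinuousOnInterval_integral (hf : IntervalIntegrable f volume a b) :
    AbsolutelyContinuousOnInterval (fun x ↦ ∫ t in a..x, f t) a b := by
  refine absolutelyContinuousOnInterval_of_dist_le (C := 1)
    (hf.norm.absolutelyContinuousOnInterval_intervalIntegral left_mem_uIcc) fun x hx y hy ↦ ?_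
  have hsub : ∀ z ∈ uIcc a b, IntervalIntegrable f volume a z := fun z hz ↦
    hf.mono_set (uIcc_subset_uIcc_left hz)
  rw [dist_comm, dist_comm (∫ t in a..x, ‖f t‖), dist_eq_norm, dist_eq_norm, one_mul,
    intervalIntegral.integral_interval_sub_left (hsub y hy) (hsub x hx),
    intervalIntegral.integral_interval_sub_left (hsub y hy).norm (hsub x hx).norm]
  exact intervalIntegral.norm_integral_le_abs_integral_norm

/-- `f` is absolutely continuous on the interval with endpoints `a` and `b`, with integrable
almost-everywhere derivative `f'`. The endpoints may come in either order. -/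
structure HasACDerivOn (f f' : ℝ → E) (a b : ℝ) : Prop where
  absolutelyContinuousOnInterval : AbsolutelyContinuousOnInterval f a b
  intervalIntegrable : IntervalIntegrable f' volume a b
  ae_hasDerivAt : ∀ᵐ x, x ∈ uIcc a b → HasDerivAt f (f' x) x

namespace HasACDerivOn

lemma of_eq_add_integral [CompleteSpace E] (hf' : IntervalIntegrable f' volume a b)
    (h : ∀ x ∈ uIcc a b, f x = f a + ∫ t in a..x, f' t) : HasACDerivOn f f' a b where
  absolutelyContinuousOnInterval :=
    absolutelyContinuousOnInterval_of_dist_le (C := 1) (absolutelyContinuousOnInterval_integral hf')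
      fun x hx y hy ↦ by rw [h x hx, h y hy, dist_add_left, one_mul]
  intervalIntegrable := hf'
  ae_hasDerivAt := by
    filter_upwards [hf'.ae_hasDerivAt_integral, ae_mem_Ioo_of_mem_uIcc a b] with x hderiv hIoo hx
    refine ((hderiv hx a left_mem_uIcc).const_add (f a)).congr_of_eventuallyEq ?_
    filter_upwards [isOpen_Ioo.mem_nhds (hIoo hx)] with y hy
    exact h y (Ioo_subset_Icc_self hy)

lemma integral [CompleteSpace E] (hf' : IntervalIntegrable f' volume a b) :
    HasACDerivOn (fun x ↦ ∫ t in a..x, f' t) f' a b :=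
  of_eq_add_integral hf' fun x _ ↦ by rw [intervalIntegral.integral_same, zero_add]

lemma const (c : E) (a b : ℝ) : HasACDerivOn (fun _ ↦ c) (fun _ ↦ 0) a b where
  absolutelyContinuousOnInterval :=
    (LipschitzWith.const c).lipschitzOnWith.absolutelyContinuousOnInterval
  intervalIntegrable := intervalIntegrable_const
  ae_hasDerivAt := .of_forall fun x _ ↦ hasDerivAt_const x c

lemma continuousOn (hf : HasACDerivOn f f' a b) : ContinuousOn f (uIcc a b) :=
  hf.absolutelyContinuousOnInterval.continuousOn

lemma mono {c d : ℝ} (hf : HasACDerivOn f f' a b) (hsub : uIcc c d ⊆ uIcc a b) :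
    HasACDerivOn f f' c d where
  absolutelyContinuousOnInterval := hf.absolutelyContinuousOnInterval.mono hsub
  intervalIntegrable := hf.intervalIntegrable.mono_set hsub
  ae_hasDerivAt := hf.ae_hasDerivAt.mono fun _ hx hmem ↦ hx (hsub hmem)

lemma congr_deriv {f'' : ℝ → E} (hf : HasACDerivOn f f' a b) (h : EqOn f' f'' (uIcc a b)) :
    HasACDerivOn f f'' a b where
  absolutelyContinuousOnInterval := hf.absolutelyContinuousOnInterval
  intervalIntegrable := hf.intervalIntegrable.congr (h.mono uIoc_subset_uIcc)
  ae_hasDerivAt := hf.ae_hasDerivAt.mono fun _ hx hmem ↦ h hmem ▸ hx hmem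

lemma add (hf : HasACDerivOn f f' a b) (hg : HasACDerivOn g g' a b) :
    HasACDerivOn (fun x ↦ f x + g x) (fun x ↦ f' x + g' x) a b where
  absolutelyContinuousOnInterval :=
    hf.absolutelyContinuousOnInterval.fun_add hg.absolutelyContinuousOnInterval
  intervalIntegrable := hf.intervalIntegrable.add hg.intervalIntegrable
  ae_hasDerivAt := by
    filter_upwards [hf.ae_hasDerivAt, hg.ae_hasDerivAt] with x hfx hgx hx
    exact (hfx hx).add (hgx hx)

lemma neg (hf : HasACDerivOn f f' a b) : HasACDerivOn (fun x ↦ -f x) (fun x ↦ -f' x) a b where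
  absolutelyContinuousOnInterval := hf.absolutelyContinuousOnInterval.fun_neg
  intervalIntegrable := hf.intervalIntegrable.neg
  ae_hasDerivAt := hf.ae_hasDerivAt.mono fun _ hx hmem ↦ (hx hmem).neg

section Smul

variable {𝕜 : Type*} [RCLike 𝕜] [NormedSpace 𝕜 E] [IsScalarTower ℝ 𝕜 E] {k k' : ℝ → 𝕜}

lemma smul (hk : HasACDerivOn k k' a b) (hf : HasACDerivOn f f' a b) :
    HasACDerivOn (fun x ↦ k x • f x) (fun x ↦ k x • f' x + k' x • f x) a b where
  absolutelyContinuousOnInterval :=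
    hk.absolutelyContinuousOnInterval.fun_smul hf.absolutelyContinuousOnInterval
  intervalIntegrable := (hf.intervalIntegrable.continuousOn_smul hk.continuousOn).add
    (hk.intervalIntegrable.smul_continuousOn hf.continuousOn)
  ae_hasDerivAt := by
    filter_upwards [hk.ae_hasDerivAt, hf.ae_hasDerivAt] with x hkx hfx hx
    exact (hkx hx).smul (hfx hx)

lemma comp {G G' : 𝕜 → E} (hk : HasACDerivOn k k' a b) (hG : ∀ w, HasDerivAt G (G' w) w)
    (hG' : Continuous G') :
    HasACDerivOn (fun x ↦ G (k x)) (fun x ↦ k' x • G' (k x)) a b where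
  absolutelyContinuousOnInterval := by
    have hC1 : ContDiff 𝕜 1 G := contDiff_one_iff_deriv.2
      ⟨fun w ↦ (hG w).differentiableAt, by simpa only [funext fun w ↦ (hG w).deriv] using hG'⟩
    obtain ⟨K, hK⟩ := LocallyLipschitzOn.exists_lipschitzOnWith_of_compact
      (isCompact_uIcc.image_of_continuousOn hk.continuousOn) hC1.locallyLipschitz.locallyLipschitzOn
    exact absolutelyContinuousOnInterval_of_dist_le hk.absolutelyContinuousOnInterval
      fun x hx y hy ↦ hK.dist_le_mul _ (mem_image_of_mem k hx) _ (mem_image_of_mem k hy)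
  intervalIntegrable :=
    hk.intervalIntegrable.smul_continuousOn (hG'.comp_continuousOn hk.continuousOn)
  ae_hasDerivAt := hk.ae_hasDerivAt.mono fun x hx hmem ↦ (hG (k x)).scomp x (hx hmem)

end Smul

lemma eq_of_deriv_eq_zero (hf : HasACDerivOn f (fun _ ↦ 0) a b) {x : ℝ} (hx : x ∈ uIcc a b) :
    f x = f a := by
  obtain ⟨C, hC⟩ := hf.absolutelyContinuousOnInterval.const_of_ae_hasDerivAt_zero hf.ae_hasDerivAt
  rw [hC x hx, hC a left_mem_uIcc]

lemma integral_eq_sub [CompleteSpace E] (hf : HasACDerivOn f f' a b) :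
    ∫ t in a..b, f' t = f b - f a := by
  have hzero : HasACDerivOn (fun x ↦ f x + -∫ t in a..x, f' t) (fun _ ↦ 0) a b :=
    (hf.add (integral hf.intervalIntegrable).neg).congr_deriv fun x _ ↦ add_neg_cancel _
  have hab := hzero.eq_of_deriv_eq_zero right_mem_uIcc
  rw [intervalIntegral.integral_same, neg_zero, add_zero, ← sub_eq_add_neg] at hab
  rw [← hab, sub_sub_cancel]

end HasACDerivOn

end AbsolutelyContinuous

namespace HasACDerivOn

section Real

variable {f f' : ℝ → ℝ} {a b : ℝ}

lemma integral_mul_comp {g : ℝ → ℝ} (hf : HasACDerivOn f f' a b) (hg : Continuous g) :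
    ∫ x in a..b, f' x * g (f x) = ∫ y in f a..f b, g y := by
  have hG : ∀ y, HasDerivAt (fun y ↦ ∫ s in (0 : ℝ)..y, g s) (g y) y := fun y ↦
    intervalIntegral.integral_hasDerivAt_right (hg.intervalIntegrable _ _)
      (hg.stronglyMeasurableAtFilter _ _) hg.continuousAt
  rw [← intervalIntegral.integral_interval_sub_left (hg.intervalIntegrable 0 _)
    (hg.intervalIntegrable 0 _)]
  exact (hf.comp hG hg).integral_eq_sub

lemma mul_sub_le_sub {m : ℝ} (hf : HasACDerivOn f f' a b)
    (hm : ∀ᵐ x, x ∈ uIcc a b → m ≤ f' x) {x y : ℝ} (hx : x ∈ uIcc a b) (hy : y ∈ uIcc a b)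
    (hxy : x ≤ y) : m * (y - x) ≤ f y - f x := by
  have hsub : uIcc x y ⊆ uIcc a b := uIcc_subset_uIcc hx hy
  calc m * (y - x) = ∫ _ in x..y, m := by
        rw [intervalIntegral.integral_const, smul_eq_mul, mul_comm]
    _ ≤ ∫ t in x..y, f' t := by
        refine intervalIntegral.integral_mono_ae_restrict hxy intervalIntegrable_const
          (hf.mono hsub).intervalIntegrable ?_
        rw [Filter.EventuallyLE, ae_restrict_iff' measurableSet_Icc]
        exact hm.mono fun t ht htxy ↦ ht (hsub (Icc_subset_uIcc htxy))
    _ = f y - f x := (hf.mono hsub).integral_eq_sub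

lemma monotoneOn_mul_exp_integral {K : ℝ → ℝ} (hf : HasACDerivOn f f' a b)
    (hK : IntervalIntegrable K volume a b)
    (h : ∀ᵐ x, x ∈ uIcc a b → 0 ≤ f' x + K x * f x) :
    MonotoneOn (fun x ↦ f x * exp (∫ t in a..x, K t)) (uIcc a b) := by
  intro x hx y hy hxy
  have hprod := hf.smul ((integral hK).comp Real.hasDerivAt_exp continuous_exp)
  simp only [smul_eq_mul] at hprod
  have hle := hprod.mul_sub_le_sub (m := 0) ?_ hx hy hxy
  · rwa [zero_mul, sub_nonneg] at hle
  · filter_upwards [h] with t ht hmem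
    linarith [mul_nonneg (ht hmem) (exp_pos (∫ s in a..t, K s)).le]

lemma eq_zero_of_abs_deriv_le {K : ℝ → ℝ} (hf : HasACDerivOn f f' a b)
    (hK : IntervalIntegrable K volume a b)
    (h : ∀ᵐ x, x ∈ uIcc a b → |f' x| ≤ K x * f x) {x₀ : ℝ} (hx₀ : x₀ ∈ uIcc a b)
    (hzero : f x₀ = 0) {x : ℝ} (hx : x ∈ uIcc a b) : f x = 0 := by
  have hmono := hf.monotoneOn_mul_exp_integral hK <| h.mono fun t ht hmem ↦ by
    linarith [(abs_le.1 (ht hmem)).1]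
  have hanti := hf.neg.monotoneOn_mul_exp_integral hK.neg <| h.mono fun t ht hmem ↦ by
    simp only [Pi.neg_apply]
    linarith [(abs_le.1 (ht hmem)).2]
  have hpos : ∀ s : ℝ, 0 < exp s := exp_pos
  rcases le_total x x₀ with hle | hle
  · have h₁ := hmono hx hx₀ hle
    have h₂ := hanti hx hx₀ hle
    simp only [hzero, zero_mul, neg_zero] at h₁ h₂
    exact le_antisymm (nonpos_of_mul_nonpos_left h₁ (hpos _))
      (neg_nonpos.1 (nonpos_of_mul_nonpos_left h₂ (hpos _)))
  · have h₁ := hmono hx₀ hx hle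
    have h₂ := hanti hx₀ hx hle
    simp only [hzero, zero_mul, neg_zero] at h₁ h₂
    exact le_antisymm (neg_nonneg.1 (nonneg_of_mul_nonneg_left h₂ (hpos _)))
      (nonneg_of_mul_nonneg_left h₁ (hpos _))

end Real

section Complex

variable {z z' : ℝ → ℂ} {a b : ℝ}

lemma intervalIntegrable_logDeriv (hz : HasACDerivOn z z' a b)
    (hne : ∀ x ∈ uIcc a b, z x ≠ 0) : IntervalIntegrable (fun x ↦ z' x / z x) volume a b := by
  simpa only [div_eq_mul_inv, Pi.inv_apply] using
    hz.intervalIntegrable.mul_continuousOn (hz.continuousOn.inv₀ hne)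

lemma eq_mul_exp_integral_logDeriv (hz : HasACDerivOn z z' a b)
    (hne : ∀ x ∈ uIcc a b, z x ≠ 0) {x : ℝ} (hx : x ∈ uIcc a b) :
    z x = z a * Complex.exp (∫ t in a..x, z' t / z t) := by
  have hJ := (integral (hz.intervalIntegrable_logDeriv hne)).neg
  have hquot := (hJ.comp Complex.hasDerivAt_exp Complex.continuous_exp).smul hz
  have hconst := (hquot.congr_deriv (f'' := fun _ ↦ 0) fun t ht ↦ by
    have := hne t ht
    simp only [smul_eq_mul]
    field_simp
    ring).eq_of_deriv_eq_zero hx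
  simp only [intervalIntegral.integral_same, neg_zero, Complex.exp_zero, smul_eq_mul, one_mul]
    at hconst
  rw [← hconst, mul_right_comm, ← Complex.exp_add, neg_add_cancel, Complex.exp_zero, one_mul]

lemma exists_angle (hz : HasACDerivOn z z' a b) (hne : ∀ x ∈ uIcc a b, z x ≠ 0) :
    ∃ φ : ℝ → ℝ, HasACDerivOn φ (fun x ↦ (z' x / z x).im) a b ∧
      ∀ x ∈ uIcc a b, z x = ‖z x‖ * Complex.exp (φ x * Complex.I) := by
  have hlog := hz.intervalIntegrable_logDeriv hne
  have him : IntervalIntegrable (fun x ↦ (z' x / z x).im) volume a b :=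
    ⟨hlog.1.im, hlog.2.im⟩
  refine ⟨fun x ↦ (z a).arg + ∫ t in a..x, (z' t / z t).im,
    of_eq_add_integral him fun x _ ↦ by simp, fun x hx ↦ ?_⟩
  have hJim : ∫ t in a..x, (z' t / z t).im = (∫ t in a..x, z' t / z t).im :=
    Complex.imCLM.intervalIntegral_comp_comm (hlog.mono_set (uIcc_subset_uIcc_left hx))
  beta_reduce
  rw [hJim, hz.eq_mul_exp_integral_logDeriv hne hx]
  generalize ∫ t in a..x, z' t / z t = J
  rw [norm_mul, Complex.norm_exp]
  calc z a * Complex.exp J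
      = ‖z a‖ * Complex.exp ((z a).arg * Complex.I) * Complex.exp (J.re + J.im * Complex.I) := by
        rw [Complex.norm_mul_exp_arg_mul_I, Complex.re_add_im]
    _ = ((‖z a‖ * exp J.re : ℝ) : ℂ) * Complex.exp (((z a).arg + J.im : ℝ) * Complex.I) := by
        push_cast
        rw [add_mul, Complex.exp_add, Complex.exp_add]
        ring

end Complex

end HasACDerivOn

lemma integral_eq_mul_of_periodic_of_even {f : ℝ → ℝ} {p : ℝ} (hp : Function.Periodic f p)
    (heven : ∀ x, f (-x) = f x) (hint : ∀ s t, IntervalIntegrable f volume s t) (m : ℕ) (s : ℝ) :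
    ∫ x in s..s + m * p, f x = m * (2 * ∫ x in (0 : ℝ)..p / 2, f x) := by
  have hneg : ∫ x in -(p / 2)..0, f x = ∫ x in (0 : ℝ)..p / 2, f x := by
    simpa [heven] using intervalIntegral.integral_comp_neg (a := -(p / 2)) (b := 0) f
  have hperiod : ∫ x in s..s + p, f x = 2 * ∫ x in (0 : ℝ)..p / 2, f x := by
    rw [hp.intervalIntegral_add_eq s (-(p / 2)), show -(p / 2) + p = p / 2 by ring,
      ← intervalIntegral.integral_add_adjacent_intervals (hint _ 0) (hint 0 _), hneg, two_mul]
  have hm := hp.intervalIntegral_add_zsmul_eq m s hint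
  rw [hperiod] at hm
  simpa using hm

lemma exists_int_sub_eq_of_norm_mul_exp_eq {w : ℂ} {θ₁ θ₂ : ℝ} (hw : w ≠ 0)
    (h₁ : w = ‖w‖ * Complex.exp (θ₁ * Complex.I))
    (h₂ : w = ‖w‖ * Complex.exp (θ₂ * Complex.I)) : ∃ k : ℤ, θ₂ - θ₁ = k * (2 * π) := by
  have hexp := mul_left_cancel₀ (Complex.ofReal_ne_zero.2 (norm_ne_zero_iff.2 hw))
    (h₂.symm.trans h₁)
  obtain ⟨k, hk⟩ := Complex.exp_eq_exp_iff_exists_int.1 hexp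
  refine ⟨k, ?_⟩
  have him := congrArg Complex.im hk
  simp only [Complex.mul_im, Complex.ofReal_re, Complex.I_im, mul_one, Complex.ofReal_im,
    Complex.I_re, mul_zero, add_zero, Complex.add_im, Complex.intCast_re, Complex.mul_re,
    Complex.re_ofNat, Complex.im_ofNat, sub_zero, zero_mul, Complex.intCast_im, sub_self] at him
  linarith

/-! ### Prüfer angle -/

namespace IsSolOn

variable {a u v : ℝ → ℝ} {c d : ℝ}

lemma continuousOn (h : IsSolOn a u v c d) : ContinuousOn u (Icc c d) :=
  fun x hx ↦ (h.1 x hx).continuousWithinAt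

lemma hasACDerivOn_deriv (h : IsSolOn a u v c d) (hcd : c ≤ d)
    (ha : IntervalIntegrable a volume c d) :
    HasACDerivOn v (fun x ↦ -(a x * u x)) c d := by
  have hI : uIcc c d = Icc c d := uIcc_of_le hcd
  refine .of_eq_add_integral (ha.mul_continuousOn (hI ▸ h.continuousOn)).neg fun x hx ↦ ?_
  rw [h.2 x (hI ▸ hx), intervalIntegral.integral_neg, sub_eq_add_neg]

lemma hasACDerivOn (h : IsSolOn a u v c d) (hcd : c ≤ d)
    (ha : IntervalIntegrable a volume c d) : HasACDerivOn u v c d := by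
  have hv := (h.hasACDerivOn_deriv hcd ha).continuousOn
  refine .of_eq_add_integral hv.intervalIntegrable fun x hx ↦ ?_
  rw [uIcc_of_le hcd] at hx hv
  have hsub : Icc c x ⊆ Icc c d := Icc_subset_Icc_right hx.2
  rw [intervalIntegral.integral_eq_sub_of_hasDerivAt_of_le hx.1 (h.continuousOn.mono hsub)
    (fun y hy ↦ (h.1 y (hsub (Ioo_subset_Icc_self hy))).hasDerivAt
      (Icc_mem_nhds hy.1 (hy.2.trans_le hx.2)))
    (hv.mono (uIcc_of_le hx.1 ▸ hsub)).intervalIntegrable, add_sub_cancel]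

lemma of_hasDerivAt (hu : ∀ x, HasDerivAt u (v x) x)
    (hv : ∀ x, HasDerivAt v (-(a x * u x)) x) (ha : ∀ s t, IntervalIntegrable a volume s t) :
    IsSolOn a u v c d := by
  have hcont : Continuous u := continuous_iff_continuousAt.2 fun x ↦ (hu x).continuousAt
  refine ⟨fun x _ ↦ (hu x).hasDerivWithinAt, fun x _ ↦ ?_⟩
  have hftc := intervalIntegral.integral_eq_sub_of_hasDerivAt (fun y _ ↦ hv y)
    ((ha c x).mul_continuousOn hcont.continuousOn).neg
  rw [intervalIntegral.integral_neg] at hftc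
  linarith

lemma eq_zero_of_eq_zero (h : IsSolOn a u v c d) (ha : IntervalIntegrable a volume c d)
    {x₀ : ℝ} (hx₀ : x₀ ∈ Icc c d) (hu₀ : u x₀ = 0) (hv₀ : v x₀ = 0) {x : ℝ}
    (hx : x ∈ Icc c d) : u x = 0 := by
  have hcd : c ≤ d := hx₀.1.trans hx₀.2
  have hu := h.hasACDerivOn hcd ha
  have hv := h.hasACDerivOn_deriv hcd ha
  have henergy := (hu.smul hu).add (hv.smul hv)
  simp only [smul_eq_mul] at henergy
  have hvanish : u x * u x + v x * v x = 0 := by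
    refine henergy.eq_zero_of_abs_deriv_le (K := fun t ↦ 1 + |a t|)
      (intervalIntegrable_const.add ha.abs) (.of_forall fun t _ ↦ ?_) (x₀ := x₀)
      (Icc_subset_uIcc hx₀) (by simp [hu₀, hv₀]) (Icc_subset_uIcc hx)
    calc |u t * v t + v t * u t + (v t * -(a t * u t) + -(a t * u t) * v t)|
        = |1 - a t| * |2 * (u t * v t)| := by rw [← abs_mul]; ring_nf
      _ ≤ (1 + |a t|) * (u t * u t + v t * v t) := by
        refine mul_le_mul (by simpa using abs_sub (1 : ℝ) (a t)) ?_ (abs_nonneg _) (by positivity)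
        rw [abs_le]
        constructor <;> nlinarith [sq_nonneg (u t + v t), sq_nonneg (u t - v t)]
  exact mul_self_eq_zero.1 (le_antisymm (by linarith [mul_self_nonneg (v x)]) (mul_self_nonneg _))

end IsSolOn

/-- The point `ω u - i u'` of the phase plane, whose argument is the Prüfer angle. The sign makes
the angle increase along solutions of `u'' + a u = 0` with `a > 0`. -/
noncomputable def phasePoint (ω u v : ℝ) : ℂ := (ω * u : ℝ) - v * Complex.I

@[simp] lemma phasePoint_re (ω u v : ℝ) : (phasePoint ω u v).re = ω * u := by simp [phasePoint]

@[simp] lemma phasePoint_im (ω u v : ℝ) : (phasePoint ω u v).im = -v := by simp [phasePoint]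

lemma HasACDerivOn.phasePoint {u u' v v' : ℝ → ℝ} {c d : ℝ} (hu : HasACDerivOn u u' c d)
    (hv : HasACDerivOn v v' c d) (ω : ℝ) :
    HasACDerivOn (fun x ↦ phasePoint ω (u x) (v x)) (fun x ↦ phasePoint ω (u' x) (v' x)) c d := by
  have h := (hu.smul (const (ω : ℂ) c d)).add (hv.smul (const (-Complex.I) c d))
  simp only [smul_zero, zero_add, Complex.real_smul] at h
  convert h using 2 with x x <;> rw [_root_.phasePoint] <;> push_cast <;> ring

/-- `φ` is a Prüfer angle of `u'' + a u = 0` at frequency `ω`, that is, a continuous argument of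
`ω u - i u'` along a solution; eliminating the solution leaves this first-order equation for `φ`. -/
def IsPrueferAngle (ω : ℝ) (a φ : ℝ → ℝ) (c d : ℝ) : Prop :=
  HasACDerivOn φ (fun x ↦ ω + (a x - ω ^ 2) / ω * cos (φ x) ^ 2) c d

namespace IsSolOn

variable {a u v : ℝ → ℝ} {c d ω : ℝ}

lemma phasePoint_ne_zero (h : IsSolOn a u v c d) (ha : IntervalIntegrable a volume c d)
    (hne : ∃ x ∈ Icc c d, u x ≠ 0) (hω : ω ≠ 0) {x : ℝ} (hx : x ∈ Icc c d) :
    phasePoint ω (u x) (v x) ≠ 0 := by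
  intro hzero
  obtain ⟨y, hy, huy⟩ := hne
  simp only [Complex.ext_iff, phasePoint_re, phasePoint_im, Complex.zero_re, Complex.zero_im,
    mul_eq_zero, hω, false_or, neg_eq_zero] at hzero
  exact huy (h.eq_zero_of_eq_zero ha hx hzero.1 hzero.2 hy)

lemma exists_prueferAngle (h : IsSolOn a u v c d) (hcd : c ≤ d)
    (ha : IntervalIntegrable a volume c d) (hne : ∃ x ∈ Icc c d, u x ≠ 0) (hω : ω ≠ 0) :
    ∃ φ : ℝ → ℝ, IsPrueferAngle ω a φ c d ∧
      ∀ x ∈ uIcc c d, phasePoint ω (u x) (v x) =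
        ‖phasePoint ω (u x) (v x)‖ * Complex.exp (φ x * Complex.I) := by
  have hz := (h.hasACDerivOn hcd ha).phasePoint (h.hasACDerivOn_deriv hcd ha) ω
  have hz₀ : ∀ x ∈ uIcc c d, phasePoint ω (u x) (v x) ≠ 0 := fun x hx ↦
    h.phasePoint_ne_zero ha hne hω (uIcc_of_le hcd ▸ hx)
  obtain ⟨φ, hφ, hpolar⟩ := hz.exists_angle hz₀
  refine ⟨φ, hφ.congr_deriv fun x hx ↦ ?_, hpolar⟩
  have hre : ω * u x = ‖phasePoint ω (u x) (v x)‖ * cos (φ x) := by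
    simpa [Complex.exp_ofReal_mul_I_re] using congrArg Complex.re (hpolar x hx)
  have hnorm := Complex.normSq_eq_norm_sq (phasePoint ω (u x) (v x))
  have hpos := norm_ne_zero_iff.2 (hz₀ x hx)
  have hexpand : ‖phasePoint ω (u x) (v x)‖ ^ 2 = (ω * u x) ^ 2 + v x ^ 2 := by
    rw [← hnorm, Complex.normSq_apply, phasePoint_re, phasePoint_im]
    ring
  beta_reduce
  rw [Complex.div_im, hnorm]
  simp only [phasePoint_re, phasePoint_im]
  generalize ‖phasePoint ω (u x) (v x)‖ = r at *
  have hcos : cos (φ x) = ω * u x / r := by rw [hre, mul_div_cancel_left₀ _ hpos]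
  rw [hcos]
  field_simp
  rw [hexpand]
  ring

end IsSolOn

/-! ### Rotation of the Prüfer angle above the frequency `ω` -/

section Rotation

variable {a φ : ℝ → ℝ} {c d ω : ℝ}

lemma countable_setOf_cos_eq_zero : {θ : ℝ | cos θ = 0}.Countable := by
  refine (countable_range fun k : ℤ ↦ (2 * k + 1) * π / 2).mono fun θ hθ ↦ ?_
  obtain ⟨k, hk⟩ := Real.cos_eq_zero_iff.1 hθ
  exact ⟨k, hk.symm⟩

namespace IsPrueferAngle

lemma mul_sub_le_sub (hφ : IsPrueferAngle ω a φ c d) (hω : 0 < ω)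
    (ha : ∀ᵐ x, x ∈ uIcc c d → ω ^ 2 ≤ a x) {x y : ℝ} (hx : x ∈ uIcc c d) (hy : y ∈ uIcc c d)
    (hxy : x ≤ y) : ω * (y - x) ≤ φ y - φ x :=
  HasACDerivOn.mul_sub_le_sub hφ (ha.mono fun _ ht hmem ↦ le_add_of_nonneg_right
    (mul_nonneg (div_nonneg (sub_nonneg.2 (ht hmem)) hω.le) (sq_nonneg _))) hx hy hxy

lemma strictMonoOn (hφ : IsPrueferAngle ω a φ c d) (hω : 0 < ω)
    (ha : ∀ᵐ x, x ∈ uIcc c d → ω ^ 2 ≤ a x) : StrictMonoOn φ (uIcc c d) := fun _ hx _ hy hxy ↦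
  sub_pos.1 ((mul_pos hω (sub_pos.2 hxy)).trans_le (hφ.mul_sub_le_sub hω ha hx hy hxy.le))

lemma mul_sub_lt_sub (hφ : IsPrueferAngle ω a φ c d) (hω : 0 < ω) (hcd : c < d)
    (ha : ∀ᵐ x, x ∈ uIcc c d → ω ^ 2 ≤ a x)
    (hpos : 0 < volume {x ∈ Icc c d | ω ^ 2 < a x}) : ω * (d - c) < φ d - φ c := by
  have hnull : volume ({x ∈ uIcc c d | cos (φ x) = 0} ∪ {c}) = 0 := by
    refine Countable.measure_zero (.union ?_ (countable_singleton c)) _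
    exact MapsTo.countable_of_injOn (t := {θ : ℝ | cos θ = 0}) (fun x hx ↦ hx.2)
      ((hφ.strictMonoOn hω ha).injOn.mono fun x hx ↦ hx.1) countable_setOf_cos_eq_zero
  have hint := hφ.intervalIntegrable.sub (intervalIntegrable_const (c := ω))
  simp only [add_sub_cancel_left] at hint
  have hexcess : 0 < ∫ x in c..d, (a x - ω ^ 2) / ω * cos (φ x) ^ 2 := by
    refine (intervalIntegral.integral_pos_iff_support_of_nonneg_ae' ?_ hint).2 ⟨hcd, ?_⟩
    · rw [Filter.EventuallyLE, ae_restrict_iff' measurableSet_uIoc]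
      exact ha.mono fun x hx hmem ↦ mul_nonneg
        (div_nonneg (sub_nonneg.2 (hx (uIoc_subset_uIcc hmem))) hω.le) (sq_nonneg _)
    · rw [← measure_sdiff_null hnull] at hpos
      refine hpos.trans_le (measure_mono ?_)
      rintro x ⟨⟨hx, hax⟩, hgood⟩
      simp only [mem_union, mem_ofPred_eq, mem_singleton_iff, not_or, not_and] at hgood
      exact ⟨mul_ne_zero (div_pos (sub_pos.2 hax) hω).ne'
        (pow_ne_zero 2 (hgood.1 (Icc_subset_uIcc hx))), lt_of_le_of_ne' hx.1 hgood.2, hx.2⟩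
  have htotal := hφ.integral_eq_sub
  rw [intervalIntegral.integral_add intervalIntegrable_const hint,
    intervalIntegral.integral_const, smul_eq_mul] at htotal
  linarith

end IsPrueferAngle

end Rotation

/-! ### The truncated weight and the Lyapunov inequality -/

section TruncSecSq

/-- `sec²` truncated at the value `sec² δ`, for `0 < δ < π / 2`. Integrating `φ'` against it along a
Prüfer angle gives the sharp constant in the Lyapunov inequality. -/
noncomputable def truncSecSq (δ θ : ℝ) : ℝ := 1 / max (cos θ ^ 2) (cos δ ^ 2)

variable {δ θ : ℝ}

lemma max_cos_sq_pos (hδ : 0 < cos δ) (θ : ℝ) : 0 < max (cos θ ^ 2) (cos δ ^ 2) :=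
  lt_max_of_lt_right (by positivity)

lemma continuous_truncSecSq (hδ : 0 < cos δ) : Continuous (truncSecSq δ) :=
  continuous_const.div (by fun_prop) fun θ ↦ (max_cos_sq_pos hδ θ).ne'

lemma truncSecSq_periodic (δ : ℝ) : Function.Periodic (truncSecSq δ) π := fun θ ↦ by
  simp only [truncSecSq, cos_add_pi, neg_sq]

lemma truncSecSq_neg (δ θ : ℝ) : truncSecSq δ (-θ) = truncSecSq δ θ := by
  simp only [truncSecSq, cos_neg]

lemma truncSecSq_nonneg (δ θ : ℝ) : 0 ≤ truncSecSq δ θ := by unfold truncSecSq; positivity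

lemma truncSecSq_le (hδ : 0 < cos δ) (θ : ℝ) : truncSecSq δ θ ≤ 1 / cos δ ^ 2 :=
  one_div_le_one_div_of_le (by positivity) (le_max_right _ _)

lemma truncSecSq_mul_cos_sq_le_one (hδ : 0 < cos δ) (θ : ℝ) :
    truncSecSq δ θ * cos θ ^ 2 ≤ 1 := by
  rw [truncSecSq, one_div_mul_eq_div, div_le_one (max_cos_sq_pos hδ θ)]
  exact le_max_left _ _

lemma truncSecSq_of_abs_le (hθ : |θ| ≤ δ) (hδ : δ ≤ π / 2) : truncSecSq δ θ = 1 / cos θ ^ 2 := by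
  have hδ₀ : 0 ≤ δ := (abs_nonneg θ).trans hθ
  have hle : cos δ ≤ cos θ := by
    rw [← cos_abs θ]
    exact cos_le_cos_of_nonneg_of_le_pi (abs_nonneg θ) (by linarith [pi_pos]) hθ
  have hcos : 0 ≤ cos δ := cos_nonneg_of_mem_Icc ⟨by linarith, hδ⟩
  rw [truncSecSq, max_eq_left (pow_le_pow_left₀ hcos hle 2)]

lemma truncSecSq_of_mem_Icc (hδ : 0 ≤ δ) (hθ : θ ∈ Icc δ (π / 2)) :
    truncSecSq δ θ = 1 / cos δ ^ 2 := by
  have hle : cos θ ≤ cos δ := cos_le_cos_of_nonneg_of_le_pi hδ (by linarith [pi_pos, hθ.2]) hθ.1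
  have hcos : 0 ≤ cos θ := cos_nonneg_of_mem_Icc ⟨by linarith [hθ.1, pi_pos], hθ.2⟩
  rw [truncSecSq, max_eq_right (pow_le_pow_left₀ hcos hle 2)]

lemma integral_truncSecSq_half_period (hδ₀ : 0 ≤ δ) (hδ : δ < π / 2) :
    ∫ θ in (0 : ℝ)..π / 2, truncSecSq δ θ = tan δ + (π / 2 - δ) / cos δ ^ 2 := by
  have hcosδ : 0 < cos δ := cos_pos_of_mem_Ioo ⟨by linarith [pi_pos], hδ⟩
  have hint := fun s t ↦ (continuous_truncSecSq hcosδ).intervalIntegrable (μ := volume) s t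
  have hinner : ∫ θ in (0 : ℝ)..δ, truncSecSq δ θ = tan δ := by
    rw [intervalIntegral.integral_eq_sub_of_hasDerivAt (f := tan) (fun θ hθ ↦ ?_) (hint _ _),
      tan_zero, sub_zero]
    rw [uIcc_of_le hδ₀] at hθ
    rw [truncSecSq_of_abs_le ((abs_of_nonneg hθ.1).trans_le hθ.2) hδ.le]
    exact hasDerivAt_tan (cos_pos_of_mem_Ioo ⟨by linarith [hθ.1, pi_pos], hθ.2.trans_lt hδ⟩).ne'
  have houter : ∫ θ in δ..π / 2, truncSecSq δ θ = (π / 2 - δ) / cos δ ^ 2 := by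
    rw [intervalIntegral.integral_congr (g := fun _ ↦ 1 / cos δ ^ 2) fun θ hθ ↦
      truncSecSq_of_mem_Icc hδ₀ (uIcc_of_le hδ.le ▸ hθ), intervalIntegral.integral_const,
      smul_eq_mul, mul_one_div]
  rw [← intervalIntegral.integral_add_adjacent_intervals (hint 0 δ) (hint δ _), hinner, houter]

lemma integral_truncSecSq_comp_lt {φ : ℝ → ℝ} {c d : ℝ} (hφ : ContinuousOn φ (Icc c d))
    (hcd : c < d) (hδ₀ : 0 < δ) (hδ : δ < π / 2) (hrot : π ≤ φ d - φ c) :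
    ∫ x in c..d, truncSecSq δ (φ x) < (d - c) / cos δ ^ 2 := by
  have hcosδ : 0 < cos δ := cos_pos_of_mem_Ioo ⟨by linarith [pi_pos], hδ⟩
  have hcosδ1 : cos δ < 1 := by
    simpa using cos_lt_cos_of_nonneg_of_le_pi le_rfl (by linarith [pi_pos]) hδ₀
  set k : ℤ := ⌈φ c / π⌉
  obtain ⟨x, hx, hφx⟩ : (k * π : ℝ) ∈ φ '' Icc c d := by
    refine intermediate_value_Icc hcd.le hφ ⟨(div_le_iff₀ pi_pos).1 (Int.le_ceil _), ?_⟩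
    have := mul_lt_mul_of_pos_right (Int.ceil_lt_add_one (φ c / π)) pi_pos
    rw [add_mul, div_mul_cancel₀ _ pi_ne_zero, one_mul] at this
    linarith
  calc ∫ x in c..d, truncSecSq δ (φ x) < ∫ _ in c..d, 1 / cos δ ^ 2 := by
        refine intervalIntegral.integral_lt_integral_of_continuousOn_of_le_of_exists_lt hcd
          ((continuous_truncSecSq hcosδ).comp_continuousOn hφ) continuousOn_const
          (fun _ _ ↦ truncSecSq_le hcosδ _) ⟨x, hx, ?_⟩
        have hcosφ : cos (φ x) ^ 2 = 1 := by
          have := Real.cos_sq_add_sin_sq (φ x)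
          rwa [hφx, Real.sin_int_mul_pi, zero_pow two_ne_zero, add_zero, ← hφx] at this
        exact one_div_lt_one_div_of_lt (by positivity)
          (lt_max_of_lt_left (hcosφ ▸ pow_lt_one₀ hcosδ.le hcosδ1 two_ne_zero))
    _ = (d - c) / cos δ ^ 2 := by
        rw [intervalIntegral.integral_const, smul_eq_mul, mul_one_div]

end TruncSecSq

namespace IsPrueferAngle

variable {a φ : ℝ → ℝ} {c d ω δ : ℝ}

lemma le_integral_deriv_mul_truncSecSq (hφ : IsPrueferAngle ω a φ c d) (hδ₀ : 0 ≤ δ)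
    (hδ : δ < π / 2) {m : ℕ} (hrot : m * π ≤ φ d - φ c) :
    m * (2 * (tan δ + (π / 2 - δ) / cos δ ^ 2)) ≤
      ∫ x in c..d, (ω + (a x - ω ^ 2) / ω * cos (φ x) ^ 2) * truncSecSq δ (φ x) := by
  have hcosδ : 0 < cos δ := cos_pos_of_mem_Ioo ⟨by linarith [pi_pos], hδ⟩
  have hcont := continuous_truncSecSq hcosδ
  rw [hφ.integral_mul_comp hcont, ← integral_truncSecSq_half_period hδ₀ hδ,
    ← integral_eq_mul_of_periodic_of_even (truncSecSq_periodic δ) (truncSecSq_neg δ)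
      (fun s t ↦ hcont.intervalIntegrable s t) m (φ c)]
  refine intervalIntegral.integral_mono_interval le_rfl ?_ (by linarith)
    (.of_forall fun θ ↦ truncSecSq_nonneg δ θ) (hcont.intervalIntegrable _ _)
  exact le_add_of_nonneg_right (by positivity)

lemma mul_integral_truncSecSq_sub_le (hφ : IsPrueferAngle ω a φ c d) (hω : 0 < ω) (hcd : c ≤ d)
    (ha : IntervalIntegrable a volume c d) (hle : ∀ᵐ x, x ∈ uIcc c d → ω ^ 2 ≤ a x)
    (hδ : 0 < cos δ) :
    ω * (∫ x in c..d, (ω + (a x - ω ^ 2) / ω * cos (φ x) ^ 2) * truncSecSq δ (φ x)) -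
      ω ^ 2 * ∫ x in c..d, truncSecSq δ (φ x) ≤ ∫ x in c..d, (a x - ω ^ 2) := by
  have hcont : ContinuousOn (fun x ↦ truncSecSq δ (φ x)) (uIcc c d) :=
    (continuous_truncSecSq hδ).comp_continuousOn hφ.continuousOn
  have hφg := (hφ.intervalIntegrable.mul_continuousOn hcont).const_mul ω
  have hg := hcont.intervalIntegrable.const_mul (μ := volume) (ω ^ 2)
  rw [← intervalIntegral.integral_const_mul, ← intervalIntegral.integral_const_mul,
    ← intervalIntegral.integral_sub hφg hg]
  refine intervalIntegral.integral_mono_ae_restrict hcd (hφg.sub hg)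
    (ha.sub intervalIntegrable_const) ?_
  rw [Filter.EventuallyLE, ae_restrict_iff' measurableSet_Icc]
  filter_upwards [hle] with x hx hmem
  calc ω * ((ω + (a x - ω ^ 2) / ω * cos (φ x) ^ 2) * truncSecSq δ (φ x)) -
          ω ^ 2 * truncSecSq δ (φ x)
      = (a x - ω ^ 2) * (truncSecSq δ (φ x) * cos (φ x) ^ 2) := by field_simp; ring
    _ ≤ a x - ω ^ 2 := mul_le_of_le_one_right (sub_nonneg.2 (hx (Icc_subset_uIcc hmem)))
        (truncSecSq_mul_cos_sq_le_one hδ _)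

theorem mul_tan_lt_integral_sub (hφ : IsPrueferAngle ω a φ c d) (hω : 0 < ω) (hcd : c < d)
    (ha : IntervalIntegrable a volume c d) (hle : ∀ᵐ x, x ∈ uIcc c d → ω ^ 2 ≤ a x)
    (hδ₀ : 0 < δ) (hδ : δ < π / 2) {m : ℕ} (hrot : m * π ≤ φ d - φ c)
    (hlen : ω * (d - c) = m * (π - 2 * δ)) :
    2 * ω * m * tan δ < ∫ x in c..d, (a x - ω ^ 2) := by
  have hcosδ : 0 < cos δ := cos_pos_of_mem_Ioo ⟨by linarith [pi_pos], hδ⟩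
  have hm : (1 : ℝ) ≤ m := by
    refine Nat.one_le_cast.2 (Nat.one_le_iff_ne_zero.2 fun h ↦ ?_)
    rw [h, Nat.cast_zero, zero_mul] at hlen
    exact (mul_pos hω (sub_pos.2 hcd)).ne' hlen
  have hlower := le_integral_deriv_mul_truncSecSq hφ hδ₀.le hδ hrot
  have hupper := integral_truncSecSq_comp_lt (uIcc_of_le hcd.le ▸ hφ.continuousOn) hcd hδ₀ hδ
    ((le_mul_of_one_le_left pi_pos.le hm).trans hrot)
  calc 2 * ω * m * tan δ
      = ω * (m * (2 * (tan δ + (π / 2 - δ) / cos δ ^ 2))) - ω ^ 2 * ((d - c) / cos δ ^ 2) := by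
        linear_combination (ω / cos δ ^ 2) * hlen
    _ < ω * (∫ x in c..d, (ω + (a x - ω ^ 2) / ω * cos (φ x) ^ 2) * truncSecSq δ (φ x)) -
          ω ^ 2 * ∫ x in c..d, truncSecSq δ (φ x) := by
        linarith [mul_le_mul_of_nonneg_left hlower hω.le,
          mul_lt_mul_of_pos_left hupper (pow_pos hω 2)]
    _ ≤ ∫ x in c..d, (a x - ω ^ 2) := mul_integral_truncSecSq_sub_le hφ hω hcd.le ha hle hcosδ

end IsPrueferAngle

section LowerBound

variable {T : ℝ} {n : ℕ} {a : ℝ → ℝ}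

lemma lam_eq_sq (T : ℝ) (n : ℕ) : lam T n = (2 * π * n / T) ^ 2 := by
  rw [lam]
  ring

lemma beta1_eq_tan (T : ℝ) (n : ℕ) :
    beta1 T n = 2 * (2 * π * n / T) * (2 * (n + 1) : ℕ) * tan (π / (2 * (n + 1))) := by
  have hangle : n * π / (2 * (n + 1)) = π / 2 - π / (2 * (n + 1)) := by
    field_simp
    ring
  rw [beta1, hangle, cot_eq_cos_div_sin, cos_pi_div_two_sub, sin_pi_div_two_sub,
    ← tan_eq_sin_div_cos]
  push_cast
  ring

lemma Prec.ae_le {c d : ℝ → ℝ} (h : Prec T c d) (hT : 0 ≤ T) : ∀ᵐ x, x ∈ uIcc 0 T → c x ≤ d x := by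
  rw [uIcc_of_le hT]
  exact (ae_restrict_iff' measurableSet_Icc).1 h.1

lemma Prec.integral_abs_sub {c d : ℝ → ℝ} (h : Prec T c d) (hT : 0 ≤ T) :
    ∫ x in (0 : ℝ)..T, |d x - c x| = ∫ x in (0 : ℝ)..T, (d x - c x) :=
  intervalIntegral.integral_congr_ae <| (h.ae_le hT).mono fun _ hx hmem ↦
    abs_of_nonneg (sub_nonneg.2 (hx (uIoc_subset_uIcc hmem)))

lemma MemLT.intervalIntegrable (h : MemLT T a) (hT : 0 ≤ T) : IntervalIntegrable a volume 0 T :=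
  (intervalIntegrable_iff_integrableOn_Icc_of_le hT).2 h.2.2

lemma exists_prueferAngle_rotating_of_mem_LambdaN (hT : 0 < T) (hn : 1 ≤ n) (ha : a ∈ LambdaN T n) :
    ∃ φ, IsPrueferAngle (2 * π * n / T) a φ 0 T ∧ (2 * (n + 1) : ℕ) * π ≤ φ T - φ 0 := by
  obtain ⟨hL, hprec, u, v, ⟨hsol, hu, hv⟩, hne⟩ := ha
  have hω : 0 < 2 * π * n / T := by positivity
  have hint := hL.intervalIntegrable hT.le
  obtain ⟨φ, hφ, hpolar⟩ := hsol.exists_prueferAngle hT.le hint hne hω.ne'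
  refine ⟨φ, hφ, ?_⟩
  have hpolarT := hpolar T right_mem_uIcc
  rw [← hu, ← hv] at hpolarT
  obtain ⟨k, hk⟩ := exists_int_sub_eq_of_norm_mul_exp_eq
    (hsol.phasePoint_ne_zero hint hne hω.ne' (left_mem_Icc.2 hT.le)) (hpolar 0 left_mem_uIcc)
    hpolarT
  have hle := hprec.ae_le hT.le
  have hpos := hprec.2
  simp only [lam_eq_sq] at hle hpos
  have hrot := hφ.mul_sub_lt_sub hω hT hle hpos
  have hnk : (n : ℝ) * (2 * π) < k * (2 * π) := by
    calc (n : ℝ) * (2 * π) = 2 * π * n / T * (T - 0) := by field_simp; ring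
      _ < k * (2 * π) := hrot.trans_eq hk
  have hk1 : (n : ℤ) + 1 ≤ k :=
    mod_cast lt_of_mul_lt_mul_right hnk two_pi_pos.le
  have hk1' : (n : ℝ) + 1 ≤ k := mod_cast hk1
  rw [hk]
  push_cast
  nlinarith [pi_pos]

theorem beta1_lt_integral_abs_sub_lam (hT : 0 < T) (hn : 1 ≤ n) (ha : a ∈ LambdaN T n) :
    beta1 T n < ∫ x in (0 : ℝ)..T, |a x - lam T n| := by
  obtain ⟨φ, hφ, hrot⟩ := exists_prueferAngle_rotating_of_mem_LambdaN hT hn ha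
  have hle := ha.2.1.ae_le hT.le
  have hδ : π / (2 * (n + 1)) < π / 2 := by
    have : (1 : ℝ) ≤ n := mod_cast hn
    gcongr
    linarith
  rw [ha.2.1.integral_abs_sub hT.le, beta1_eq_tan]
  simp only [lam_eq_sq] at hle ⊢
  refine hφ.mul_tan_lt_integral_sub (by positivity) hT (ha.1.intervalIntegrable hT.le) hle
    (by positivity) hδ hrot ?_
  push_cast
  field_simp
  ring

end LowerBound

/-! ### Near-optimal potentials -/

section CornerRatio

variable {α β : ℝ}

/-- The coefficient `h` for which `x ↦ sin (α β(x))` solves `u'' + (α² + (1 - β'²) h(β)) u = 0`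
whenever `β'' = -(1 - β'²) tan β`. At the removable singularity `β = 0` it takes the value `0`. -/
noncomputable def cornerRatio (α β : ℝ) : ℝ :=
  α * (tan β * cos (α * β) - α * sin (α * β)) / sin (α * β)

lemma cornerRatio_neg (α β : ℝ) : cornerRatio α (-β) = cornerRatio α β := by
  rw [cornerRatio, cornerRatio, mul_neg, sin_neg, cos_neg, tan_neg, div_neg]
  ring

lemma cornerRatio_abs (α β : ℝ) : cornerRatio α |β| = cornerRatio α β := by
  rcases abs_choice β with h | h
  · rw [h]
  · rw [h, cornerRatio_neg]

lemma measurable_cornerRatio (α : ℝ) : Measurable (cornerRatio α) := by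
  unfold cornerRatio
  simp only [tan_eq_sin_div_cos]
  fun_prop

lemma sin_mul_pos (hα : α ∈ Ioo 0 1) (hβ : β ∈ Ioc 0 (π / 2)) : 0 < sin (α * β) :=
  sin_pos_of_pos_of_lt_pi (mul_pos hα.1 hβ.1)
    ((mul_le_of_le_one_left hβ.1.le hα.2.le).trans_lt (by linarith [hβ.2, pi_pos]))

lemma cornerRatio_mul_sin (hα : α ∈ Ioo 0 1) (hβ : |β| < π / 2) :
    cornerRatio α β * sin (α * β) = α * (tan β * cos (α * β) - α * sin (α * β)) := by
  rcases eq_or_ne β 0 with rfl | hne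
  · simp
  refine div_mul_cancel₀ _ fun hzero ↦ ?_
  have hpos := sin_mul_pos hα ⟨abs_pos.2 hne, hβ.le⟩
  rcases abs_choice β with h | h <;> rw [h] at hpos
  · exact hpos.ne' hzero
  · rw [mul_neg, sin_neg, hzero, neg_zero] at hpos
    exact hpos.false

lemma sin_mul_le_tan_mul_cos (hα : α ∈ Ioo 0 1) (hβ : β ∈ Ioo 0 (π / 2)) :
    sin (α * β) ≤ tan β * cos (α * β) := by
  have hcos : 0 < cos β := cos_pos_of_mem_Ioo ⟨by linarith [hβ.1, pi_pos], hβ.2⟩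
  have hdiff : 0 ≤ sin (β - α * β) := by
    refine sin_nonneg_of_nonneg_of_le_pi ?_ ?_ <;>
      linarith [mul_pos hα.1 hβ.1, mul_lt_of_lt_one_left hβ.1 hα.2, hβ.2, pi_pos]
  rw [sin_sub] at hdiff
  rw [tan_eq_sin_div_cos, div_mul_eq_mul_div, le_div_iff₀ hcos]
  linarith

lemma cornerRatio_pos (hα : α ∈ Ioo 0 1) (hne : β ≠ 0) (hβ : |β| < π / 2) :
    0 < cornerRatio α β := by
  have hmem : |β| ∈ Ioo 0 (π / 2) := ⟨abs_pos.2 hne, hβ⟩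
  have hsin := sin_mul_pos hα (Ioo_subset_Ioc_self hmem)
  rw [← cornerRatio_abs]
  refine div_pos (mul_pos hα.1 (sub_pos.2 ?_)) hsin
  exact (mul_lt_of_lt_one_left hsin hα.2).trans_le (sin_mul_le_tan_mul_cos hα hmem)

lemma cornerRatio_nonneg (hα : α ∈ Ioo 0 1) (hβ : |β| < π / 2) : 0 ≤ cornerRatio α β := by
  rcases eq_or_ne β 0 with rfl | hne
  · simp [cornerRatio]
  · exact (cornerRatio_pos hα hne hβ).le

lemma mul_sin_le_sin_mul (hα : α ∈ Icc 0 1) (hβ : β ∈ Icc 0 π) : α * sin β ≤ sin (α * β) := by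
  simpa using strictConcaveOn_sin_Icc.concaveOn.2 (left_mem_Icc.2 pi_pos.le) hβ
    (sub_nonneg.2 hα.2) hα.1 (sub_add_cancel 1 α)

lemma mul_tan_mul_cot_le (hα : α ∈ Ioo 0 1) (hβ : β ∈ Ioo 0 (π / 2)) :
    α * tan β * cot (α * β) ≤ α * cot (α * (π / 2)) * tan β + 1 / sin (α * (π / 2)) := by
  have hcosβ : 0 < cos β := cos_pos_of_mem_Ioo ⟨by linarith [hβ.1, pi_pos], hβ.2⟩
  have hsinβ : 0 < sin β := sin_pos_of_pos_of_lt_pi hβ.1 (by linarith [hβ.2, pi_pos])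
  have hsin := sin_mul_pos hα (Ioo_subset_Ioc_self hβ)
  have hsin_half := sin_mul_pos hα (right_mem_Ioc.2 (half_pos pi_pos))
  have hconcave : α * sin β ≤ sin (α * β) :=
    mul_sin_le_sin_mul (Ioo_subset_Icc_self hα) ⟨hβ.1.le, by linarith [hβ.2, pi_pos]⟩
  have hmono : sin (α * (π / 2 - β)) ≤ cos β := by
    have hle := mul_le_of_le_one_left (sub_pos.2 hβ.2).le hα.2.le
    rw [← sin_pi_div_two_sub]
    refine sin_le_sin_of_le_of_le_pi_div_two ?_ (by linarith [hβ.1]) hle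
    linarith [mul_pos hα.1 (sub_pos.2 hβ.2), pi_pos]
  have hsplit : α * tan β * cot (α * β) = α * cot (α * (π / 2)) * tan β +
      α * sin β * sin (α * (π / 2 - β)) / (cos β * sin (α * β) * sin (α * (π / 2))) := by
    rw [mul_sub, sin_sub, tan_eq_sin_div_cos, cot_eq_cos_div_sin, cot_eq_cos_div_sin]
    generalize sin (α * (π / 2)) = s at hsin_half ⊢
    field_simp
    ring
  rw [hsplit, add_le_add_iff_left, div_le_div_iff₀ (by positivity) hsin_half, one_mul]
  refine mul_le_mul_of_nonneg_right ?_ hsin_half.le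
  calc α * sin β * sin (α * (π / 2 - β)) ≤ α * sin β * cos β :=
        mul_le_mul_of_nonneg_left hmono (mul_pos hα.1 hsinβ).le
    _ ≤ sin (α * β) * cos β := mul_le_mul_of_nonneg_right hconcave hcosβ.le
    _ = cos β * sin (α * β) := mul_comm _ _

lemma cornerRatio_le (hα : α ∈ Ioo 0 1) (hβ : |β| < π / 2) :
    cornerRatio α β ≤ α * cot (α * (π / 2)) * |tan β| + 1 / sin (α * (π / 2)) := by
  rcases eq_or_ne β 0 with rfl | hne
  · simpa [cornerRatio] using (sin_mul_pos hα (right_mem_Ioc.2 (half_pos pi_pos))).le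
  have hmem : |β| ∈ Ioo 0 (π / 2) := ⟨abs_pos.2 hne, hβ⟩
  have hsin := sin_mul_pos hα (Ioo_subset_Ioc_self hmem)
  have htan : |tan β| = tan |β| := by
    have := tan_pos_of_pos_of_lt_pi_div_two hmem.1 hmem.2
    rcases abs_choice β with h | h <;> rw [h] at this ⊢
    · exact abs_of_pos this
    · rw [← abs_neg, ← tan_neg, abs_of_pos this]
  calc cornerRatio α β = α * tan |β| * cot (α * |β|) - α ^ 2 := by
        rw [← cornerRatio_abs, cornerRatio, cot_eq_cos_div_sin]
        field_simp
    _ ≤ α * tan |β| * cot (α * |β|) := sub_le_self _ (sq_nonneg α)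
    _ ≤ α * cot (α * (π / 2)) * |tan β| + 1 / sin (α * (π / 2)) :=
        htan ▸ mul_tan_mul_cot_le hα hmem

end CornerRatio

section Zigzag

variable {κ τ : ℝ}

/-- A smooth approximation, as `κ → 1`, of the triangle wave of period `2 π` and slopes `±1`. -/
noncomputable def zigzag (κ τ : ℝ) : ℝ := arcsin (κ * cos τ)

/-- The derivative of `zigzag κ`, for `|κ| < 1`. -/
noncomputable def zigzagDeriv (κ τ : ℝ) : ℝ := -(κ * sin τ) / cos (zigzag κ τ)

lemma zigzag_zero (κ : ℝ) : zigzag κ 0 = arcsin κ := by rw [zigzag, cos_zero, mul_one]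

lemma zigzag_pi_div_two (κ : ℝ) : zigzag κ (π / 2) = 0 := by
  rw [zigzag, cos_pi_div_two, mul_zero, arcsin_zero]

lemma zigzag_neg (κ τ : ℝ) : zigzag κ (-τ) = zigzag κ τ := by rw [zigzag, zigzag, cos_neg]

lemma zigzag_antiperiodic (κ : ℝ) : Function.Antiperiodic (zigzag κ) π := fun τ ↦ by
  rw [zigzag, zigzag, cos_add_pi, mul_neg, arcsin_neg]

lemma zigzagDeriv_neg (κ τ : ℝ) : zigzagDeriv κ (-τ) = -zigzagDeriv κ τ := by
  rw [zigzagDeriv, zigzagDeriv, zigzag_neg, sin_neg, mul_neg, neg_div]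

lemma zigzagDeriv_antiperiodic (κ : ℝ) : Function.Antiperiodic (zigzagDeriv κ) π := fun τ ↦ by
  rw [zigzagDeriv, zigzagDeriv, zigzag_antiperiodic, sin_add_pi, cos_neg, mul_neg, neg_div]

lemma continuous_zigzag (κ : ℝ) : Continuous (zigzag κ) :=
  continuous_arcsin.comp (by fun_prop)

lemma zigzag_nonneg (hκ : 0 ≤ κ) (hτ : τ ∈ Icc 0 (π / 2)) : 0 ≤ zigzag κ τ :=
  arcsin_nonneg.2 (mul_nonneg hκ (cos_nonneg_of_mem_Icc ⟨by linarith [hτ.1, pi_pos], hτ.2⟩))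

lemma abs_mul_cos_lt_one (hκ : |κ| < 1) (τ : ℝ) : |κ * cos τ| < 1 := by
  rw [abs_mul]
  exact (mul_le_of_le_one_right (abs_nonneg κ) (abs_cos_le_one τ)).trans_lt hκ

lemma sin_zigzag (hκ : |κ| < 1) (τ : ℝ) : sin (zigzag κ τ) = κ * cos τ := by
  have h := abs_lt.1 (abs_mul_cos_lt_one hκ τ)
  exact sin_arcsin h.1.le h.2.le

lemma abs_zigzag_lt (hκ : |κ| < 1) (τ : ℝ) : |zigzag κ τ| < π / 2 := by
  have h := abs_lt.1 (abs_mul_cos_lt_one hκ τ)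
  exact abs_lt.2 ⟨neg_pi_div_two_lt_arcsin.2 h.1, arcsin_lt_pi_div_two.2 h.2⟩

lemma cos_zigzag_pos (hκ : |κ| < 1) (τ : ℝ) : 0 < cos (zigzag κ τ) :=
  cos_pos_of_mem_Ioo (abs_lt.1 (abs_zigzag_lt hκ τ))

lemma one_sub_zigzagDeriv_sq_pos (hκ : |κ| < 1) (τ : ℝ) : 0 < 1 - zigzagDeriv κ τ ^ 2 := by
  have hcos := cos_zigzag_pos hκ τ
  have hsq := cos_sq_add_sin_sq (zigzag κ τ)
  rw [sin_zigzag hκ] at hsq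
  have heq : 1 - zigzagDeriv κ τ ^ 2 = (1 - κ ^ 2) / cos (zigzag κ τ) ^ 2 := by
    rw [zigzagDeriv]
    field_simp
    linear_combination hsq - κ ^ 2 * cos_sq_add_sin_sq τ
  rw [heq]
  exact div_pos (sub_pos.2 ((sq_lt_one_iff_abs_lt_one κ).2 hκ)) (pow_pos hcos 2)

lemma hasDerivAt_zigzag (hκ : |κ| < 1) (τ : ℝ) : HasDerivAt (zigzag κ) (zigzagDeriv κ τ) τ := by
  have h := abs_lt.1 (abs_mul_cos_lt_one hκ τ)
  refine ((hasDerivAt_arcsin h.1.ne' h.2.ne).comp τ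
    ((hasDerivAt_cos τ).const_mul κ)).congr_deriv ?_
  rw [zigzagDeriv, zigzag, cos_arcsin]
  ring

lemma hasDerivAt_zigzagDeriv (hκ : |κ| < 1) (τ : ℝ) :
    HasDerivAt (zigzagDeriv κ) (-((1 - zigzagDeriv κ τ ^ 2) * tan (zigzag κ τ))) τ := by
  have hcos := (cos_zigzag_pos hκ τ).ne'
  refine (((hasDerivAt_sin τ).const_mul κ).fun_neg.fun_div
    (hasDerivAt_zigzag hκ τ).cos hcos).congr_deriv ?_
  rw [tan_eq_sin_div_cos, ← sin_zigzag hκ, zigzagDeriv]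
  field_simp
  ring

lemma continuous_zigzagDeriv (hκ : |κ| < 1) : Continuous (zigzagDeriv κ) :=
  continuous_iff_continuousAt.2 fun τ ↦ (hasDerivAt_zigzagDeriv hκ τ).continuousAt

lemma continuous_tan_zigzag (hκ : |κ| < 1) : Continuous fun τ ↦ tan (zigzag κ τ) := by
  simp only [tan_eq_sin_div_cos]
  exact (continuous_sin.comp (continuous_zigzag κ)).div (continuous_cos.comp (continuous_zigzag κ))
    fun τ ↦ (cos_zigzag_pos hκ τ).ne'

lemma integral_one_sub_zigzagDeriv_sq_mul_abs_tan (hκ₀ : 0 ≤ κ) (hκ : |κ| < 1) :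
    ∫ τ in (0 : ℝ)..π / 2, (1 - zigzagDeriv κ τ ^ 2) * |tan (zigzag κ τ)| = κ := by
  have hcont := continuous_zigzagDeriv hκ
  have htan_cont := continuous_tan_zigzag hκ
  have hderiv : ∀ τ ∈ uIcc 0 (π / 2), HasDerivAt (fun τ ↦ -zigzagDeriv κ τ)
      ((1 - zigzagDeriv κ τ ^ 2) * |tan (zigzag κ τ)|) τ := fun τ hτ ↦ by
    rw [uIcc_of_le (by positivity)] at hτ
    have htan := tan_nonneg_of_nonneg_of_le_pi_div_two (zigzag_nonneg hκ₀ hτ)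
      (abs_lt.1 (abs_zigzag_lt hκ τ)).2.le
    rw [abs_of_nonneg htan, ← neg_neg (_ * tan _)]
    exact (hasDerivAt_zigzagDeriv hκ τ).neg
  rw [intervalIntegral.integral_eq_sub_of_hasDerivAt hderiv
    (Continuous.intervalIntegrable (by fun_prop) _ _)]
  simp [zigzagDeriv, zigzag_pi_div_two]

lemma integral_one_sub_zigzagDeriv_sq_le (hκ : |κ| < 1) :
    ∫ τ in (0 : ℝ)..π / 2, (1 - zigzagDeriv κ τ ^ 2) ≤ 2 * (π / 2 - arcsin κ) := by
  have hcont := continuous_zigzagDeriv hκ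
  calc ∫ τ in (0 : ℝ)..π / 2, (1 - zigzagDeriv κ τ ^ 2)
      ≤ ∫ τ in (0 : ℝ)..π / 2, 2 * (1 + zigzagDeriv κ τ) := by
        refine intervalIntegral.integral_mono_on (by positivity)
          (Continuous.intervalIntegrable (by fun_prop) _ _)
          (Continuous.intervalIntegrable (by fun_prop) _ _) fun τ _ ↦ ?_
        linarith [sq_nonneg (1 + zigzagDeriv κ τ)]
    _ = 2 * (π / 2 - arcsin κ) := by
        rw [intervalIntegral.integral_const_mul, intervalIntegral.integral_add
          intervalIntegrable_const (hcont.intervalIntegrable _ _),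
          intervalIntegral.integral_eq_sub_of_hasDerivAt (fun τ _ ↦ hasDerivAt_zigzag hκ τ)
          (hcont.intervalIntegrable _ _), intervalIntegral.integral_const, zigzag_zero,
          zigzag_pi_div_two, smul_eq_mul]
        ring

end Zigzag

section ZigzagPotential

variable {α κ τ : ℝ}

/-- The excess over `α²` of the potential for which `sin (α * zigzag κ τ)` is a solution. As `κ → 1`
it concentrates at the multiples of `π`, where the triangle wave has its corners. -/
noncomputable def zigzagPotential (α κ τ : ℝ) : ℝ :=
  (1 - zigzagDeriv κ τ ^ 2) * cornerRatio α (zigzag κ τ)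

lemma zigzagPotential_periodic (α κ : ℝ) : Function.Periodic (zigzagPotential α κ) π := fun τ ↦ by
  rw [zigzagPotential, zigzagPotential, zigzag_antiperiodic, zigzagDeriv_antiperiodic, neg_sq,
    cornerRatio_neg]

lemma zigzagPotential_neg (α κ τ : ℝ) : zigzagPotential α κ (-τ) = zigzagPotential α κ τ := by
  rw [zigzagPotential, zigzagPotential, zigzag_neg, zigzagDeriv_neg, neg_sq]

lemma measurable_zigzagPotential (α κ : ℝ) : Measurable (zigzagPotential α κ) := by
  have hzigzag := (continuous_zigzag κ).measurable
  have hcorner := (measurable_cornerRatio α).comp hzigzag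
  unfold zigzagPotential zigzagDeriv
  fun_prop

lemma zigzagPotential_nonneg (hα : α ∈ Ioo 0 1) (hκ : |κ| < 1) (τ : ℝ) :
    0 ≤ zigzagPotential α κ τ :=
  mul_nonneg (one_sub_zigzagDeriv_sq_pos hκ τ).le (cornerRatio_nonneg hα (abs_zigzag_lt hκ τ))

lemma zigzagPotential_pos (hα : α ∈ Ioo 0 1) (hκ₀ : κ ≠ 0) (hκ : |κ| < 1) (hτ : cos τ ≠ 0) :
    0 < zigzagPotential α κ τ := by
  have hne : zigzag κ τ ≠ 0 := fun h ↦ by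
    have := sin_zigzag hκ τ
    rw [h, sin_zero] at this
    exact mul_ne_zero hκ₀ hτ this.symm
  exact mul_pos (one_sub_zigzagDeriv_sq_pos hκ τ) (cornerRatio_pos hα hne (abs_zigzag_lt hκ τ))

/-- A continuous majorant of `zigzagPotential α κ` whose integral over a quarter period of
`zigzag κ` is computable in the limit `κ → 1`. -/
noncomputable def zigzagMajorant (α κ τ : ℝ) : ℝ :=
  α * cot (α * (π / 2)) * ((1 - zigzagDeriv κ τ ^ 2) * |tan (zigzag κ τ)|) +
    1 / sin (α * (π / 2)) * (1 - zigzagDeriv κ τ ^ 2)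

lemma zigzagPotential_le_zigzagMajorant (hα : α ∈ Ioo 0 1) (hκ : |κ| < 1) (τ : ℝ) :
    zigzagPotential α κ τ ≤ zigzagMajorant α κ τ := by
  calc zigzagPotential α κ τ
      ≤ (1 - zigzagDeriv κ τ ^ 2) *
          (α * cot (α * (π / 2)) * |tan (zigzag κ τ)| + 1 / sin (α * (π / 2))) :=
        mul_le_mul_of_nonneg_left (cornerRatio_le hα (abs_zigzag_lt hκ τ))
          (one_sub_zigzagDeriv_sq_pos hκ τ).le
    _ = zigzagMajorant α κ τ := by
        rw [zigzagMajorant]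
        ring

lemma continuous_zigzagMajorant (α : ℝ) (hκ : |κ| < 1) : Continuous (zigzagMajorant α κ) := by
  have hderiv := continuous_zigzagDeriv hκ
  have htan := continuous_tan_zigzag hκ
  unfold zigzagMajorant
  fun_prop

lemma intervalIntegrable_zigzagPotential (hα : α ∈ Ioo 0 1) (hκ : |κ| < 1) (s t : ℝ) :
    IntervalIntegrable (zigzagPotential α κ) volume s t := by
  refine ((continuous_zigzagMajorant α hκ).intervalIntegrable s t).mono_fun
    (measurable_zigzagPotential α κ).aestronglyMeasurable (.of_forall fun τ ↦ ?_)
  have hnonneg := zigzagPotential_nonneg hα hκ τ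
  have hle := zigzagPotential_le_zigzagMajorant hα hκ τ
  exact (abs_of_nonneg hnonneg).trans_le (hle.trans (le_abs_self _))

lemma integral_zigzagPotential_le (hα : α ∈ Ioo 0 1) (hκ₀ : 0 ≤ κ) (hκ : |κ| < 1) :
    ∫ τ in (0 : ℝ)..π / 2, zigzagPotential α κ τ ≤
      α * cot (α * (π / 2)) * κ + 1 / sin (α * (π / 2)) * (2 * (π / 2 - arcsin κ)) := by
  have hsin := sin_mul_pos hα (right_mem_Ioc.2 (half_pos pi_pos))
  have hderiv := continuous_zigzagDeriv hκ
  have htan := continuous_tan_zigzag hκ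
  calc ∫ τ in (0 : ℝ)..π / 2, zigzagPotential α κ τ
      ≤ ∫ τ in (0 : ℝ)..π / 2, zigzagMajorant α κ τ :=
        intervalIntegral.integral_mono_on (by positivity)
          (intervalIntegrable_zigzagPotential hα hκ _ _)
          ((continuous_zigzagMajorant α hκ).intervalIntegrable _ _)
          fun τ _ ↦ zigzagPotential_le_zigzagMajorant hα hκ τ
    _ = α * cot (α * (π / 2)) * κ +
          1 / sin (α * (π / 2)) * ∫ τ in (0 : ℝ)..π / 2, (1 - zigzagDeriv κ τ ^ 2) := by
        simp only [zigzagMajorant]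
        rw [intervalIntegral.integral_add (Continuous.intervalIntegrable (by fun_prop) _ _)
          (Continuous.intervalIntegrable (by fun_prop) _ _), intervalIntegral.integral_const_mul,
          intervalIntegral.integral_const_mul, integral_one_sub_zigzagDeriv_sq_mul_abs_tan hκ₀ hκ]
    _ ≤ _ := by
        gcongr
        exact integral_one_sub_zigzagDeriv_sq_le hκ

lemma hasDerivAt_sin_mul_zigzag (α : ℝ) (hκ : |κ| < 1) (τ : ℝ) :
    HasDerivAt (fun τ ↦ sin (α * zigzag κ τ)) (α * zigzagDeriv κ τ * cos (α * zigzag κ τ)) τ :=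
  ((hasDerivAt_zigzag hκ τ).const_mul α).sin.congr_deriv (mul_comm _ _)

lemma hasDerivAt_mul_cos_mul_zigzag (hα : α ∈ Ioo 0 1) (hκ : |κ| < 1) (τ : ℝ) :
    HasDerivAt (fun τ ↦ α * zigzagDeriv κ τ * cos (α * zigzag κ τ))
      (-((α ^ 2 + zigzagPotential α κ τ) * sin (α * zigzag κ τ))) τ := by
  refine (((hasDerivAt_zigzagDeriv hκ τ).const_mul α).mul
    ((hasDerivAt_zigzag hκ τ).const_mul α).cos).congr_deriv ?_
  rw [zigzagPotential, add_mul, mul_assoc _ (cornerRatio _ _),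
    cornerRatio_mul_sin hα (abs_zigzag_lt hκ τ)]
  ring

end ZigzagPotential

section ZigzagCoeff

variable {α κ l T : ℝ} {n : ℕ}

/-- The coefficient of the equation solved by `sin (α * zigzag κ (l * x))`. -/
noncomputable def zigzagCoeff (α κ l x : ℝ) : ℝ := l ^ 2 * (α ^ 2 + zigzagPotential α κ (l * x))

lemma intervalIntegrable_zigzagCoeff (hα : α ∈ Ioo 0 1) (hκ : |κ| < 1) (hl : l ≠ 0) (s t : ℝ) :
    IntervalIntegrable (zigzagCoeff α κ l) volume s t := by
  refine (intervalIntegrable_const.add ?_).const_mul _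
  have := (intervalIntegrable_zigzagPotential hα hκ (l * s) (l * t)).comp_mul_left (c := l)
  simpa [hl] using this

lemma isSolOn_zigzagCoeff (hα : α ∈ Ioo 0 1) (hκ : |κ| < 1) (hl : l ≠ 0) (c d : ℝ) :
    IsSolOn (zigzagCoeff α κ l) (fun x ↦ sin (α * zigzag κ (l * x)))
      (fun x ↦ l * (α * zigzagDeriv κ (l * x) * cos (α * zigzag κ (l * x)))) c d := by
  have hscale : ∀ x, HasDerivAt (fun x ↦ l * x) l x := fun x ↦ by
    simpa using (hasDerivAt_id x).const_mul l
  refine .of_hasDerivAt (fun x ↦ ?_) (fun x ↦ ?_) (intervalIntegrable_zigzagCoeff hα hκ hl)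
  · exact ((hasDerivAt_sin_mul_zigzag α hκ (l * x)).comp x (hscale x)).congr_deriv (mul_comm _ _)
  · refine (((hasDerivAt_mul_cos_mul_zigzag hα hκ (l * x)).comp x
      (hscale x)).const_mul l).congr_deriv ?_
    rw [zigzagCoeff]
    ring

lemma memLT_zigzagCoeff (hα : α ∈ Ioo 0 1) (hκ : |κ| < 1) (hl : l ≠ 0) (hT : 0 ≤ T) {m : ℕ}
    (hlT : l * T = m * π) : MemLT T (zigzagCoeff α κ l) := by
  refine ⟨?_, fun x ↦ ?_, ?_⟩
  · have := (measurable_zigzagPotential α κ).comp (measurable_const_mul l)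
    exact (this.const_add _).const_mul _
  · rw [zigzagCoeff, zigzagCoeff, mul_add l, hlT, ← nsmul_eq_mul,
      (zigzagPotential_periodic α κ).nsmul m]
  · exact (intervalIntegrable_iff_integrableOn_Icc_of_le hT).1
      (intervalIntegrable_zigzagCoeff hα hκ hl 0 T)

lemma prec_zigzagCoeff (hα : α ∈ Ioo 0 1) (hκ₀ : κ ≠ 0) (hκ : |κ| < 1) (hl : l ≠ 0) (hT : 0 < T) :
    Prec T (fun _ ↦ (l * α) ^ 2) (zigzagCoeff α κ l) := by
  have hl2 : 0 < l ^ 2 := by positivity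
  refine ⟨.of_forall fun x ↦ ?_, ?_⟩
  · rw [mul_pow]
    exact mul_le_mul_of_nonneg_left
      (le_add_of_nonneg_right (zigzagPotential_nonneg hα hκ (l * x))) hl2.le
  · have hnull : volume {x | cos (l * x) = 0} = 0 :=
      (countable_setOf_cos_eq_zero.preimage (mul_right_injective₀ hl)).measure_zero _
    have hIcc : 0 < volume (Icc 0 T) := by simpa using hT
    rw [← measure_sdiff_null hnull] at hIcc
    refine hIcc.trans_le (measure_mono fun x hx ↦ ⟨hx.1, ?_⟩)
    rw [mul_pow]
    exact mul_lt_mul_of_pos_left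
      (lt_add_of_pos_right _ (zigzagPotential_pos hα hκ₀ hκ hx.2)) hl2

lemma integral_zigzagCoeff_sub_le (hα : α ∈ Ioo 0 1) (hκ₀ : 0 ≤ κ) (hκ : |κ| < 1) (hl : 0 < l)
    {m : ℕ} (hlT : l * T = m * π) :
    ∫ x in (0 : ℝ)..T, (zigzagCoeff α κ l x - (l * α) ^ 2) ≤ l * (m * (2 *
      (α * cot (α * (π / 2)) * κ + 1 / sin (α * (π / 2)) * (2 * (π / 2 - arcsin κ))))) := by
  calc ∫ x in (0 : ℝ)..T, (zigzagCoeff α κ l x - (l * α) ^ 2)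
      = ∫ x in (0 : ℝ)..T, l ^ 2 * zigzagPotential α κ (l * x) := by
        simp only [zigzagCoeff]
        congr 1 with x
        ring
    _ = l * ∫ τ in 0..0 + m * π, zigzagPotential α κ τ := by
        rw [intervalIntegral.integral_const_mul,
          intervalIntegral.integral_comp_mul_left _ hl.ne', mul_zero, hlT, zero_add, smul_eq_mul]
        field_simp
    _ = l * (m * (2 * ∫ τ in (0 : ℝ)..π / 2, zigzagPotential α κ τ)) := by
        rw [integral_eq_mul_of_periodic_of_even (zigzagPotential_periodic α κ)
          (zigzagPotential_neg α κ) (intervalIntegrable_zigzagPotential hα hκ)]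
    _ ≤ _ := by
        gcongr
        exact integral_zigzagPotential_le hα hκ₀ hκ

lemma natCast_div_succ_mem_Ioo (hn : 1 ≤ n) : (n / (n + 1) : ℝ) ∈ Ioo 0 1 := by
  have : (0 : ℝ) < n := mod_cast hn
  exact ⟨by positivity, (div_lt_one (by positivity)).2 (lt_add_one _)⟩

lemma zigzagCoeff_mem_LambdaN (hT : 0 < T) (hn : 1 ≤ n) (hκ : κ ∈ Ioo 0 1) :
    zigzagCoeff (n / (n + 1)) κ (2 * π * (n + 1) / T) ∈ LambdaN T n := by
  have hα : (n / (n + 1) : ℝ) ∈ Ioo 0 1 := natCast_div_succ_mem_Ioo hn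
  have hκ₁ : |κ| < 1 := abs_lt.2 ⟨by linarith [hκ.1], hκ.2⟩
  have hl : 2 * π * (n + 1) / T ≠ 0 := by positivity
  have hlT : 2 * π * (n + 1) / T * T = (n + 1 : ℕ) * (2 * π) := by
    push_cast
    field_simp
  refine ⟨memLT_zigzagCoeff hα hκ₁ hl hT.le (m := 2 * (n + 1)) ?_, ?_, _, _,
    ⟨isSolOn_zigzagCoeff hα hκ₁ hl 0 T, ?_, ?_⟩, 0, left_mem_Icc.2 hT.le, ?_⟩
  · rw [hlT]
    push_cast
    ring
  · convert prec_zigzagCoeff hα hκ.1.ne' hκ₁ hl hT using 2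
    rw [lam_eq_sq]
    field_simp
  · rw [hlT, (zigzag_antiperiodic κ).periodic_two_mul.nat_mul_eq, mul_zero]
  · rw [hlT, (zigzag_antiperiodic κ).periodic_two_mul.nat_mul_eq,
      (zigzagDeriv_antiperiodic κ).periodic_two_mul.nat_mul_eq, mul_zero]
  · rw [mul_zero, zigzag_zero]
    exact (sin_mul_pos hα ⟨arcsin_pos.2 hκ.1, arcsin_le_pi_div_two κ⟩).ne'

lemma integral_abs_zigzagCoeff_sub_lam_le (hT : 0 < T) (hn : 1 ≤ n) (hκ : κ ∈ Ioo 0 1) :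
    ∫ x in (0 : ℝ)..T, |zigzagCoeff (n / (n + 1)) κ (2 * π * (n + 1) / T) x - lam T n| ≤
      beta1 T n * κ + 16 * π * (n + 1) ^ 2 / T / sin (n / (n + 1) * (π / 2)) *
        (π / 2 - arcsin κ) := by
  have hα : (n / (n + 1) : ℝ) ∈ Ioo 0 1 := natCast_div_succ_mem_Ioo hn
  have hκ₁ : |κ| < 1 := abs_lt.2 ⟨by linarith [hκ.1], hκ.2⟩
  have hlT : 2 * π * (n + 1) / T * T = (2 * (n + 1) : ℕ) * π := by
    push_cast
    field_simp
  have hlam : lam T n = (2 * π * (n + 1) / T * (n / (n + 1))) ^ 2 := by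
    rw [lam_eq_sq]
    field_simp
  rw [(zigzagCoeff_mem_LambdaN hT hn hκ).2.1.integral_abs_sub hT.le, hlam]
  refine (integral_zigzagCoeff_sub_le hα hκ.1.le hκ₁ (by positivity) hlT).trans_eq ?_
  have hangle : n * π / (2 * (n + 1)) = n / (n + 1) * (π / 2) := by field_simp
  rw [beta1, hangle]
  push_cast
  field_simp
  ring

theorem isGLB_beta1 (hT : 0 < T) (hn : 1 ≤ n) :
    IsGLB ((fun a : ℝ → ℝ ↦ ∫ x in (0 : ℝ)..T, |a x - lam T n|) '' LambdaN T n) (beta1 T n) := by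
  refine ⟨forall_mem_image.2 fun a ha ↦ (beta1_lt_integral_abs_sub_lam hT hn ha).le,
    fun y hy ↦ ?_⟩
  have hlim : Filter.Tendsto (fun κ ↦ beta1 T n * κ +
      16 * π * (n + 1) ^ 2 / T / sin (n / (n + 1) * (π / 2)) * (π / 2 - arcsin κ))
      (nhdsWithin 1 (Iio 1)) (nhds (beta1 T n)) := by
    refine tendsto_nhdsWithin_of_tendsto_nhds (Continuous.tendsto' ?_ _ _ (by simp))
    have := continuous_arcsin
    fun_prop
  refine ge_of_tendsto hlim ?_
  filter_upwards [Ioo_mem_nhdsLT zero_lt_one] with κ hκ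
  exact (hy (mem_image_of_mem _ (zigzagCoeff_mem_LambdaN hT hn hκ))).trans
    (integral_abs_zigzagCoeff_sub_lam_le hT hn hκ)

end ZigzagCoeff

theorem stmt4 (T : ℝ) (hT : 0 < T) (n : ℕ) (hn : 1 ≤ n) :
    (∀ a ∈ LambdaN T n, beta1 T n < ∫ x in (0:ℝ)..T, |a x - lam T n|) ∧
    ¬ ∃ a ∈ LambdaN T n,
        (∫ x in (0:ℝ)..T, |a x - lam T n|) =
          sInf ((fun a : ℝ → ℝ => ∫ x in (0:ℝ)..T, |a x - lam T n|) '' LambdaN T n) := by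
  refine ⟨fun a ha ↦ beta1_lt_integral_abs_sub_lam hT hn ha, ?_⟩
  rintro ⟨a, ha, hattained⟩
  have hglb := isGLB_beta1 hT hn
  rw [hglb.csInf_eq ⟨_, mem_image_of_mem _ ha⟩] at hattained
  exact (beta1_lt_integral_abs_sub_lam hT hn ha).ne' hattained
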